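/- Let p be a prime, S a commutative ring of characteristic p, and R = S[T, T₁₁, T₁₂, T₂₂] the polynomial ring in four variables. For ij ∈ {11, 12, 22} let D_ij : R → R be the S-linear operator D_ij(f) = (T_ij + 1)·∂f/∂T_ij. Define Θ₁(f) = T²·D₁₁(f) − T·D₁₂(f) + D₂₂(f), Θ₂(f) = 2T^{p+1}·D₁₁(f) − (T + T^p)·D₁₂(f) + 2·D₂₂(f), and Θ₃(f) = T^{2p}·D₁₁(f) − T^p·D₁₂(f) + D₂₂(f). Then Θ₁, Θ₂ and Θ₃ pairwise commute: Θ_i ∘ Θ_j = Θ_j ∘ Θ_i for all i, j ∈ {1,2,3}. -/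

import Mathlib

open MvPolynomial

/-- The operator `D_ij : f ↦ (T_ij + 1)·∂f/∂T_ij` on `S[T, T₁₁, T₁₂, T₂₂]`,
with the variables indexed by `Fin 4` as `0 ↦ T`, `1 ↦ T₁₁`, `2 ↦ T₁₂`, `3 ↦ T₂₂`. -/
noncomputable def Dij {S : Type*} [CommRing S] (i : Fin 4) (f : MvPolynomial (Fin 4) S) :
    MvPolynomial (Fin 4) S :=
  (X i + 1) * pderiv i f

/-- `Θ₁ f = T²·D₁₁ f − T·D₁₂ f + D₂₂ f`. -/
noncomputable def Theta1 {S : Type*} [CommRing S] (f : MvPolynomial (Fin 4) S) :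
    MvPolynomial (Fin 4) S :=
  X 0 ^ 2 * Dij 1 f - X 0 * Dij 2 f + Dij 3 f

/-- `Θ₂ f = 2T^{p+1}·D₁₁ f − (T + T^p)·D₁₂ f + 2·D₂₂ f`. -/
noncomputable def Theta2 {S : Type*} [CommRing S] (p : ℕ) (f : MvPolynomial (Fin 4) S) :
    MvPolynomial (Fin 4) S :=
  2 * X 0 ^ (p + 1) * Dij 1 f - (X 0 + X 0 ^ p) * Dij 2 f + 2 * Dij 3 f

/-- `Θ₃ f = T^{2p}·D₁₁ f − T^p·D₁₂ f + D₂₂ f`. -/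
noncomputable def Theta3 {S : Type*} [CommRing S] (p : ℕ) (f : MvPolynomial (Fin 4) S) :
    MvPolynomial (Fin 4) S :=
  X 0 ^ (2 * p) * Dij 1 f - X 0 ^ p * Dij 2 f + Dij 3 f

/-- `θ₄⁽ᴺ⁾ f = (T − T^p)·∂f/∂T + N·f`. -/
noncomputable def theta4 {S : Type*} [CommRing S] (p : ℕ) (N : ℤ) (f : MvPolynomial (Fin 4) S) :
    MvPolynomial (Fin 4) S :=
  (X 0 - X 0 ^ p) * pderiv 0 f + (N : MvPolynomial (Fin 4) S) * f

/-- The family `(Θ₁, Θ₂, Θ₃)` indexed by `Fin 3`. -/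
noncomputable def ThetaVec {S : Type*} [CommRing S] (p : ℕ) :
    Fin 3 → MvPolynomial (Fin 4) S → MvPolynomial (Fin 4) S :=
  ![Theta1, Theta2 p, Theta3 p]

theorem pderiv_swap_aux {S : Type*} [CommRing S] (i j : Fin 4) (f : MvPolynomial (Fin 4) S) :
    pderiv i (pderiv j f) = pderiv j (pderiv i f) := by
  have h : ⁅(pderiv i : Derivation S (MvPolynomial (Fin 4) S) (MvPolynomial (Fin 4) S)),
      (pderiv j : Derivation S (MvPolynomial (Fin 4) S) (MvPolynomial (Fin 4) S))⁆ = 0 := by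
    apply MvPolynomial.derivation_ext
    intro k
    rw [Derivation.commutator_apply]
    simp only [pderiv_X, Pi.single_apply]
    split_ifs <;> simp
  have h2 := congrArg (fun D => D f) h
  simp only [Derivation.commutator_apply, Derivation.zero_apply] at h2
  exact sub_eq_zero.mp h2

theorem Dij_swap_aux {S : Type*} [CommRing S] (i j : Fin 4) (f : MvPolynomial (Fin 4) S) :
    Dij i (Dij j f) = Dij j (Dij i f) := by
  by_cases hij : i = j
  · rw [hij]
  · simp only [Dij, Derivation.leibniz, map_add, smul_eq_mul, pderiv_one,
      pderiv_X_of_ne hij, pderiv_X_of_ne (Ne.symm hij), pderiv_swap_aux i j f]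
    ring

theorem op_swap_aux {S : Type*} [CommRing S] (a b c a' b' c' f : MvPolynomial (Fin 4) S)
    (ha : ∀ i, i ≠ 0 → pderiv i a = 0) (hb : ∀ i, i ≠ 0 → pderiv i b = 0)
    (hc : ∀ i, i ≠ 0 → pderiv i c = 0)
    (ha' : ∀ i, i ≠ 0 → pderiv i a' = 0) (hb' : ∀ i, i ≠ 0 → pderiv i b' = 0)
    (hc' : ∀ i, i ≠ 0 → pderiv i c' = 0) :
    a * Dij 1 (a' * Dij 1 f - b' * Dij 2 f + c' * Dij 3 f)
      - b * Dij 2 (a' * Dij 1 f - b' * Dij 2 f + c' * Dij 3 f)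
      + c * Dij 3 (a' * Dij 1 f - b' * Dij 2 f + c' * Dij 3 f)
    = a' * Dij 1 (a * Dij 1 f - b * Dij 2 f + c * Dij 3 f)
      - b' * Dij 2 (a * Dij 1 f - b * Dij 2 f + c * Dij 3 f)
      + c' * Dij 3 (a * Dij 1 f - b * Dij 2 f + c * Dij 3 f) := by
  have key : ∀ (i : Fin 4), i ≠ 0 → ∀ u v w : MvPolynomial (Fin 4) S,
      (∀ i, i ≠ 0 → pderiv i u = 0) → (∀ i, i ≠ 0 → pderiv i v = 0) →
      (∀ i, i ≠ 0 → pderiv i w = 0) →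
      Dij i (u * Dij 1 f - v * Dij 2 f + w * Dij 3 f)
        = u * Dij i (Dij 1 f) - v * Dij i (Dij 2 f) + w * Dij i (Dij 3 f) := by
    intro i hi u v w hu hv hw
    generalize Dij 1 f = x
    generalize Dij 2 f = y
    generalize Dij 3 f = z
    simp only [Dij, Derivation.leibniz, map_add, map_sub, smul_eq_mul, hu i hi, hv i hi, hw i hi]
    ring
  rw [key 1 (by decide) _ _ _ ha hb hc, key 2 (by decide) _ _ _ ha hb hc,
    key 3 (by decide) _ _ _ ha hb hc, key 1 (by decide) _ _ _ ha' hb' hc',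
    key 2 (by decide) _ _ _ ha' hb' hc', key 3 (by decide) _ _ _ ha' hb' hc',
    Dij_swap_aux 2 1, Dij_swap_aux 3 1, Dij_swap_aux 3 2]
  ring

theorem ThetaVec_form_aux {S : Type*} [CommRing S] (p : ℕ) (i : Fin 3) :
    ∃ a b c : MvPolynomial (Fin 4) S, (∀ i, i ≠ 0 → pderiv i a = 0) ∧
      (∀ i, i ≠ 0 → pderiv i b = 0) ∧ (∀ i, i ≠ 0 → pderiv i c = 0) ∧
      ∀ f, ThetaVec p i f = a * Dij 1 f - b * Dij 2 f + c * Dij 3 f := by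
  have hX : ∀ i : Fin 4, i ≠ 0 → pderiv i (X 0 : MvPolynomial (Fin 4) S) = 0 :=
    fun i hi => pderiv_X_of_ne (Ne.symm hi)
  have hP : ∀ (n : ℕ) (i : Fin 4), i ≠ 0 → pderiv i (X 0 ^ n : MvPolynomial (Fin 4) S) = 0 := by
    intro n i hi
    rw [Derivation.leibniz_pow, hX i hi]; simp
  have h2 : ∀ i : Fin 4, pderiv i (2 : MvPolynomial (Fin 4) S) = 0 := by
    intro i
    exact_mod_cast Derivation.map_natCast (pderiv i) 2
  fin_cases i
  · exact ⟨X 0 ^ 2, X 0, 1, hP 2, hX, fun i _ => pderiv_one,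
      fun f => by simp [ThetaVec, Theta1]⟩
  · refine ⟨2 * X 0 ^ (p + 1), X 0 + X 0 ^ p, 2, ?_, ?_, fun i _ => h2 i,
      fun f => by simp [ThetaVec, Theta2]⟩
    · intro i hi
      rw [Derivation.leibniz, hP _ i hi, h2]; simp
    · intro i hi
      rw [map_add, hX i hi, hP _ i hi, add_zero]
  · exact ⟨X 0 ^ (2 * p), X 0 ^ p, 1, hP _, hP _, fun i _ => pderiv_one,
      fun f => by simp [ThetaVec, Theta3]⟩

/-- Let `p` be a prime and `S` a commutative ring of characteristic `p`.  Then the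
operators `Θ₁, Θ₂, Θ₃` on `S[T, T₁₁, T₁₂, T₂₂]` pairwise commute. -/
theorem stmt_14 (p : ℕ) (hp : p.Prime) (S : Type*) [CommRing S] [CharP S p]
    (i j : Fin 3) (f : MvPolynomial (Fin 4) S) :
    ThetaVec p i (ThetaVec p j f) = ThetaVec p j (ThetaVec p i f) := by
  obtain ⟨a, b, c, ha, hb, hc, h⟩ := ThetaVec_form_aux (S := S) p i
  obtain ⟨a', b', c', ha', hb', hc', h'⟩ := ThetaVec_form_aux (S := S) p j
  simp only [h, h']
  exact op_swap_aux a b c a' b' c' f ha hb hc ha' hb' hc'
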